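/- arXiv:2410.05888 — 5 statements merged into one kernel-verified Lean document; each statement's English description precedes it below -/
import Mathlib

section
/- Let R be a commutative ring, M an R-module, and C an R-linear relation on M. With C^♯ = C'' ∩ (C⁻¹)'' and C^♭ = C'' ∩ (C⁻¹)' + (C⁻¹)'' ∩ C', we have C^♯ ⊆ CC^♯ (i.e., every m ∈ C^♯ satisfies m ∈ Cm' for some m' ∈ C^♯). -/
variable {R : Type*} [CommRing R] {M : Type*} [AddCommGroup M] [Module R M]

/-- The inverse of a linear relation `C ⊆ M ⊕ M`. -/
def relInv (C : Submodule R (M × M)) : Submodule R (M × M) :=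
  C.comap (LinearEquiv.prodComm R M M).toLinearMap

/-- `C'' = {m : ∃ (mₙ), m₀ = m and mₙ₊₁ ∈ Cmₙ for all n}`. -/
def relDD (C : Submodule R (M × M)) : Set M :=
  {m | ∃ f : ℕ → M, f 0 = m ∧ ∀ n, (f n, f (n + 1)) ∈ C}

/-- `C' = {m : ∃ (mₙ), m₀ = m, mₙ₊₁ ∈ Cmₙ for all n, and mₙ = 0 for n ≫ 0}`. -/
def relD (C : Submodule R (M × M)) : Set M :=
  {m | ∃ f : ℕ → M, f 0 = m ∧ (∀ n, (f n, f (n + 1)) ∈ C) ∧ ∃ N, ∀ n, N ≤ n → f n = 0}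

/-- `C^♯ = C'' ∩ (C⁻¹)''`. -/
def relSharp (C : Submodule R (M × M)) : Set M :=
  relDD C ∩ relDD (relInv C)

/-- `C^♭ = C'' ∩ (C⁻¹)' + (C⁻¹)'' ∩ C'`. -/
def relFlat (C : Submodule R (M × M)) : Set M :=
  {m | ∃ a ∈ relDD C ∩ relD (relInv C), ∃ b ∈ relDD (relInv C) ∩ relD C, m = a + b}

section ChainStarts

open scoped SetRel

variable {α : Type*} {r : SetRel α α} {a : α}

/-- The analogue of `C''` for a relation `r` on a bare type: the points from which an infinite
`r`-chain, possibly with repetitions, starts. -/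
def chainStarts (r : SetRel α α) : Set α :=
  {a | ∃ f : ℕ → α, f 0 = a ∧ ∀ n, f n ~[r] f (n + 1)}

theorem mem_chainStarts_iff_exists_rel :
    a ∈ chainStarts r ↔ ∃ b ∈ chainStarts r, a ~[r] b := by
  constructor
  · rintro ⟨f, rfl, hf⟩
    exact ⟨f 1, ⟨fun n ↦ f (n + 1), rfl, fun n ↦ hf (n + 1)⟩, hf 0⟩
  · rintro ⟨_, ⟨f, rfl, hf⟩, hab⟩
    refine ⟨fun n ↦ Nat.casesOn n a f, rfl, ?_⟩
    rintro (_ | n)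
    · exact hab
    · exact hf n

theorem stmt1_general (r : SetRel α α) :
    chainStarts r ∩ chainStarts r.inv ⊆ r.image (chainStarts r ∩ chainStarts r.inv) := by
  rintro a ⟨ha, ha_inv⟩
  obtain ⟨b, hb_inv, hba⟩ := mem_chainStarts_iff_exists_rel.mp ha_inv
  have hb : b ∈ chainStarts r := mem_chainStarts_iff_exists_rel.mpr ⟨a, ha, hba⟩
  exact ⟨b, ⟨hb, hb_inv⟩, hba⟩

end ChainStarts

theorem relSharp_eq_chainStarts_inter (C : Submodule R (M × M)) :
    relSharp C = chainStarts (C : SetRel M M) ∩ chainStarts (SetRel.inv (C : SetRel M M)) :=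
  rfl

/-- `C^♯ ⊆ CC^♯`: every `m ∈ C^♯` satisfies `m ∈ Cm'` for some `m' ∈ C^♯`. -/
theorem stmt1 (C : Submodule R (M × M)) :
    ∀ m ∈ relSharp C, ∃ m' ∈ relSharp C, (m', m) ∈ C := by
  rw [relSharp_eq_chainStarts_inter]
  exact stmt1_general (C : SetRel M M)
end

section
/- Let R be a commutative ring, M an R-module, and C an R-linear relation on M. Then C^♭ = C^♯ ∩ CC^♭, where CC^♭ = {m ∈ M : ∃ m' ∈ C^♭ with (m', m) ∈ C}. -/
variable {R : Type*} [CommRing R] {M : Type*} [AddCommGroup M] [Module R M]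

/-!
Write `P(C) = C'' ∩ (C⁻¹)'`, so that `C^♭ = P(C) + P(C⁻¹)`. Every element of `P(C)` has both a
`C`-successor and a `C`-predecessor in `P(C)`; applying this to `C` and to `C⁻¹`, the same holds for
`C^♭`. Predecessors give `C^♭ ⊆ CC^♭`. Conversely, if `m ∈ C^♯` is a successor of `m' ∈ C^♭`, pick a
successor `n ∈ C^♭` of `m'`; then `m - n ∈ C0 ∩ C'' ⊆ P(C) ⊆ C^♭`, so `m ∈ C^♭`.
-/

section LinearRelation

variable {C : Submodule R (M × M)} {x y : M}

theorem mem_relInv : (x, y) ∈ relInv C ↔ (y, x) ∈ C :=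
  Iff.rfl

theorem relInv_relInv (C : Submodule R (M × M)) : relInv (relInv C) = C :=
  rfl

theorem relD_subset_relDD (C : Submodule R (M × M)) : relD C ⊆ relDD C :=
  fun _ ⟨f, h0, hf, _⟩ => ⟨f, h0, hf⟩

theorem mem_relDD_iff_exists : x ∈ relDD C ↔ ∃ y ∈ relDD C, (x, y) ∈ C := by
  constructor
  · rintro ⟨f, rfl, hf⟩
    exact ⟨f 1, ⟨fun n => f (n + 1), rfl, fun n => hf (n + 1)⟩, hf 0⟩
  · rintro ⟨_, ⟨f, rfl, hf⟩, hxf⟩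
    exact ⟨fun n => Nat.casesOn n x f, rfl, fun n => Nat.casesOn n hxf hf⟩

theorem mem_relD_iff_exists : x ∈ relD C ↔ ∃ y ∈ relD C, (x, y) ∈ C := by
  constructor
  · rintro ⟨f, rfl, hf, N, hN⟩
    exact ⟨f 1, ⟨fun n => f (n + 1), rfl, fun n => hf (n + 1), N,
      fun n hn => hN (n + 1) (Nat.le_succ_of_le hn)⟩, hf 0⟩
  · rintro ⟨_, ⟨f, rfl, hf, N, hN⟩, hxf⟩
    refine ⟨fun n => Nat.casesOn n x f, rfl, fun n => Nat.casesOn n hxf hf, N + 1, ?_⟩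
    rintro (_ | n) hn
    · exact absurd hn (Nat.not_succ_le_zero N)
    · exact hN n (Nat.le_of_succ_le_succ hn)

/-- `C''` as a submodule of `M`. -/
def relDDSubmodule (C : Submodule R (M × M)) : Submodule R M where
  carrier := relDD C
  zero_mem' := ⟨0, rfl, fun _ => C.zero_mem⟩
  add_mem' := by
    rintro _ _ ⟨f, rfl, hf⟩ ⟨g, rfl, hg⟩
    exact ⟨f + g, rfl, fun n => C.add_mem (hf n) (hg n)⟩
  smul_mem' := by
    rintro r _ ⟨f, rfl, hf⟩
    exact ⟨r • f, rfl, fun n => C.smul_mem r (hf n)⟩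

/-- `C'` as a submodule of `M`. -/
def relDSubmodule (C : Submodule R (M × M)) : Submodule R M where
  carrier := relD C
  zero_mem' := ⟨0, rfl, fun _ => C.zero_mem, 0, fun _ _ => rfl⟩
  add_mem' := by
    rintro _ _ ⟨f, rfl, hf, N, hN⟩ ⟨g, rfl, hg, K, hK⟩
    refine ⟨f + g, rfl, fun n => C.add_mem (hf n) (hg n), max N K, fun n hn => ?_⟩
    rw [Pi.add_apply, hN n (le_of_max_le_left hn), hK n (le_of_max_le_right hn), add_zero]
  smul_mem' := by
    rintro r _ ⟨f, rfl, hf, N, hN⟩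
    refine ⟨r • f, rfl, fun n => C.smul_mem r (hf n), N, fun n hn => ?_⟩
    rw [Pi.smul_apply, hN n hn, smul_zero]

/-- `C^♯` as a submodule of `M`. -/
def relSharpSubmodule (C : Submodule R (M × M)) : Submodule R M :=
  relDDSubmodule C ⊓ relDDSubmodule (relInv C)

/-- The summand `P(C) = C'' ∩ (C⁻¹)'` of `C^♭`; the other summand is `P(C⁻¹)`. -/
def relFlatSummand (C : Submodule R (M × M)) : Submodule R M :=
  relDDSubmodule C ⊓ relDSubmodule (relInv C)

/-- `C^♭` as a submodule of `M`. -/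
def relFlatSubmodule (C : Submodule R (M × M)) : Submodule R M :=
  relFlatSummand C ⊔ relFlatSummand (relInv C)

theorem coe_relSharpSubmodule (C : Submodule R (M × M)) :
    (relSharpSubmodule C : Set M) = relSharp C :=
  rfl

theorem coe_relFlatSubmodule (C : Submodule R (M × M)) :
    (relFlatSubmodule C : Set M) = relFlat C := by
  ext m
  simp only [relFlatSubmodule, SetLike.mem_coe, Submodule.mem_sup, eq_comm (b := m)]
  rfl

theorem relFlatSubmodule_relInv (C : Submodule R (M × M)) :
    relFlatSubmodule (relInv C) = relFlatSubmodule C := by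
  rw [relFlatSubmodule, relFlatSubmodule, relInv_relInv, sup_comm]

theorem relFlatSubmodule_le_relSharpSubmodule (C : Submodule R (M × M)) :
    relFlatSubmodule C ≤ relSharpSubmodule C :=
  sup_le (inf_le_inf_left _ (relD_subset_relDD (relInv C)))
    (le_inf (inf_le_right.trans (relD_subset_relDD C)) inf_le_left)

theorem exists_succ_mem_relFlatSummand (hx : x ∈ relFlatSummand C) :
    ∃ y ∈ relFlatSummand C, (x, y) ∈ C := by
  obtain ⟨y, hy, hxy⟩ := mem_relDD_iff_exists.1 hx.1
  exact ⟨y, ⟨hy, mem_relD_iff_exists.2 ⟨x, hx.2, mem_relInv.2 hxy⟩⟩, hxy⟩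

theorem exists_pred_mem_relFlatSummand (hx : x ∈ relFlatSummand C) :
    ∃ y ∈ relFlatSummand C, (y, x) ∈ C := by
  obtain ⟨y, hy, hxy⟩ := mem_relD_iff_exists.1 hx.2
  exact ⟨y, ⟨mem_relDD_iff_exists.2 ⟨x, hx.1, hxy⟩, hy⟩, mem_relInv.1 hxy⟩

theorem exists_succ_mem_relFlatSubmodule (hx : x ∈ relFlatSubmodule C) :
    ∃ y ∈ relFlatSubmodule C, (x, y) ∈ C := by
  obtain ⟨a, ha, b, hb, rfl⟩ := Submodule.mem_sup.1 hx
  obtain ⟨a', ha', haa'⟩ := exists_succ_mem_relFlatSummand ha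
  obtain ⟨b', hb', hbb'⟩ := exists_pred_mem_relFlatSummand hb
  exact ⟨a' + b', Submodule.add_mem_sup ha' hb', C.add_mem haa' (mem_relInv.1 hbb')⟩

theorem exists_pred_mem_relFlatSubmodule (hx : x ∈ relFlatSubmodule C) :
    ∃ y ∈ relFlatSubmodule C, (y, x) ∈ C := by
  rw [← relFlatSubmodule_relInv] at hx ⊢
  exact exists_succ_mem_relFlatSubmodule hx

theorem mem_relFlatSubmodule_of_zero_rel (h0 : (0, x) ∈ C) (hx : x ∈ relDD C) :
    x ∈ relFlatSubmodule C :=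
  Submodule.mem_sup_left
    ⟨hx, mem_relD_iff_exists.2 ⟨0, (relDSubmodule _).zero_mem, mem_relInv.2 h0⟩⟩

theorem mem_relFlatSubmodule_of_rel (hxy : (x, y) ∈ C) (hx : x ∈ relFlatSubmodule C)
    (hy : y ∈ relDD C) : y ∈ relFlatSubmodule C := by
  obtain ⟨z, hz, hxz⟩ := exists_succ_mem_relFlatSubmodule hx
  have h0 : (0, y - z) ∈ C := by simpa using C.sub_mem hxy hxz
  have hyz : y - z ∈ relDD C :=
    (relDDSubmodule C).sub_mem hy (relFlatSubmodule_le_relSharpSubmodule C hz).1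
  simpa using add_mem (mem_relFlatSubmodule_of_zero_rel h0 hyz) hz

end LinearRelation

/-- `C^♭ = C^♯ ∩ CC^♭`. -/
theorem stmt2 (C : Submodule R (M × M)) :
    relFlat C = relSharp C ∩ {m | ∃ m' ∈ relFlat C, (m', m) ∈ C} := by
  rw [← coe_relFlatSubmodule, ← coe_relSharpSubmodule]
  ext m
  constructor
  · intro hm
    exact ⟨relFlatSubmodule_le_relSharpSubmodule C hm, exists_pred_mem_relFlatSubmodule hm⟩
  · rintro ⟨hm, x, hx, hxm⟩
    exact mem_relFlatSubmodule_of_rel hxm hx hm.1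
end

section
/- Let R be a commutative ring, M an R-module, and C an R-linear relation on M. There is a well-defined R-module automorphism θ of C^♯/C^♭ determined by: θ(m + C^♭) = m' + C^♭ if and only if m' ∈ C^♯ ∩ (C^♭ + Cm). -/
variable {R : Type*} [CommRing R] {M : Type*} [AddCommGroup M] [Module R M]

/-!
A linear relation `G ⊆ X × Y` is the graph of an isomorphism as soon as it projects onto both
factors and its pairs satisfy `x = 0 ↔ y = 0`. The relation which `C` induces on `C^♯/C^♭` has these
properties: every element of `C^♯` has a successor and a predecessor in `C^♯`, and whenever
`(x, y) ∈ C` with `x, y ∈ C^♯`, one has `x ∈ C^♭` if and only if `y ∈ C^♭`. Replacing `C` by `C⁻¹`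
changes neither `C^♯` nor `C^♭`, so only one half of each property needs an argument.
-/

section Subquotient

variable {S : Type*} [Ring S] {X Y : Type*} [AddCommGroup X] [Module S X] [AddCommGroup Y]
  [Module S Y]

theorem exists_linearEquiv_apply_eq_iff_mem {G : Submodule S (X × Y)}
    (left_total : ∀ x, ∃ y, (x, y) ∈ G) (right_total : ∀ y, ∃ x, (x, y) ∈ G)
    (eq_zero_iff : ∀ x y, (x, y) ∈ G → (x = 0 ↔ y = 0)) :
    ∃ e : X ≃ₗ[S] Y, ∀ x y, e x = y ↔ (x, y) ∈ G := by
  have fst_surjective : Function.Surjective (Prod.fst ∘ G.subtype) := fun x =>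
    let ⟨y, hxy⟩ := left_total x
    ⟨⟨(x, y), hxy⟩, rfl⟩
  have snd_surjective : Function.Surjective (Prod.snd ∘ G.subtype) := fun y =>
    let ⟨x, hxy⟩ := right_total y
    ⟨⟨(x, y), hxy⟩, rfl⟩
  have fst_eq_iff (g g' : G) : (g : X × Y).1 = (g' : X × Y).1 ↔ (g : X × Y).2 = (g' : X × Y).2 := by
    rw [← sub_eq_zero, ← sub_eq_zero (a := (g : X × Y).2)]
    exact eq_zero_iff _ _ (G.sub_mem g.2 g'.2)
  obtain ⟨e, range_eq⟩ :=
    LinearMap.exists_linearEquiv_eq_graph fst_surjective snd_surjective fst_eq_iff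
  have G_eq : G = e.toLinearMap.graph := by rw [← range_eq, Submodule.range_subtype]
  refine ⟨e, fun x y => ?_⟩
  rw [G_eq, LinearMap.mem_graph_iff]
  exact eq_comm

/-- The linear relation from `H/K` to `H'/K'` induced by a linear relation `C`: two classes are
related when they have `C`-related representatives in `H` and `H'`. The inclusion of `K` in `H` is
not built in, so `H/K` is encoded as the quotient of `H` by the preimage of `K`. -/
def subquotientRel (C : Submodule S (X × Y)) (H K : Submodule S X) (H' K' : Submodule S Y) :
    Submodule S ((H ⧸ K.comap H.subtype) × (H' ⧸ K'.comap H'.subtype)) :=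
  (C.comap (H.subtype.prodMap H'.subtype)).map
    ((K.comap H.subtype).mkQ.prodMap (K'.comap H'.subtype).mkQ)

variable {C : Submodule S (X × Y)} {H K : Submodule S X} {H' K' : Submodule S Y}

theorem mk_mem_subquotientRel {x : H} {y : H'} (h : ((x : X), (y : Y)) ∈ C) :
    (Submodule.Quotient.mk x, Submodule.Quotient.mk y) ∈ subquotientRel C H K H' K' :=
  Submodule.mem_map_of_mem (p := C.comap (H.subtype.prodMap H'.subtype)) (r := (x, y)) h

theorem exists_rep_of_mem_subquotientRel
    {p : H ⧸ K.comap H.subtype} {q : H' ⧸ K'.comap H'.subtype}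
    (h : (p, q) ∈ subquotientRel C H K H' K') :
    ∃ (x : H) (y : H'), ((x : X), (y : Y)) ∈ C ∧
      Submodule.Quotient.mk x = p ∧ Submodule.Quotient.mk y = q := by
  obtain ⟨⟨x, y⟩, hxy, hpq⟩ := h
  exact ⟨x, y, hxy, congrArg Prod.fst hpq, congrArg Prod.snd hpq⟩

theorem mk_mem_subquotientRel_iff (hK' : K' ≤ H')
    (left_total : ∀ x ∈ H, ∃ y ∈ H', (x, y) ∈ C)
    (mem_of_rel : ∀ x ∈ H, ∀ y ∈ H', (x, y) ∈ C → x ∈ K → y ∈ K') (x : H) (y : H') :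
    (Submodule.Quotient.mk x, Submodule.Quotient.mk y) ∈ subquotientRel C H K H' K' ↔
      ∃ a ∈ K', ∃ b, ((x : X), b) ∈ C ∧ (y : Y) = a + b := by
  constructor
  · intro h
    obtain ⟨x₁, y₁, hC₁, hx, hy⟩ := exists_rep_of_mem_subquotientRel h
    obtain ⟨b, hb, hC⟩ := left_total x x.2
    have hx₁ : (x₁ - x : X) ∈ K := (Submodule.Quotient.eq (K.comap H.subtype)).1 hx
    have hy₁ : (y₁ - y : Y) ∈ K' := (Submodule.Quotient.eq (K'.comap H'.subtype)).1 hy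
    have hyb : (y₁ - b : Y) ∈ K' :=
      mem_of_rel _ (H.sub_mem x₁.2 x.2) _ (H'.sub_mem y₁.2 hb) (C.sub_mem hC₁ hC) hx₁
    refine ⟨y - b, ?_, b, hC, (sub_add_cancel _ _).symm⟩
    simpa only [sub_sub_sub_cancel_left] using K'.sub_mem hyb hy₁
  · rintro ⟨a, ha, b, hC, hy⟩
    have hyb : (y : Y) - b = a := sub_eq_of_eq_add hy
    have hb : b ∈ H' := (Submodule.sub_mem_iff_right H' y.2).1 (hyb ▸ hK' ha)
    have mk_eq : (Submodule.Quotient.mk y : H' ⧸ K'.comap H'.subtype) =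
        Submodule.Quotient.mk ⟨b, hb⟩ :=
      (Submodule.Quotient.eq _).2 (show (y : Y) - b ∈ K' from hyb ▸ ha)
    rw [mk_eq]
    exact mk_mem_subquotientRel hC

theorem exists_subquotient_linearEquiv (hK' : K' ≤ H')
    (left_total : ∀ x ∈ H, ∃ y ∈ H', (x, y) ∈ C)
    (right_total : ∀ y ∈ H', ∃ x ∈ H, (x, y) ∈ C)
    (mem_iff_of_rel : ∀ x ∈ H, ∀ y ∈ H', (x, y) ∈ C → (x ∈ K ↔ y ∈ K')) :
    ∃ e : (H ⧸ K.comap H.subtype) ≃ₗ[S] (H' ⧸ K'.comap H'.subtype), ∀ (x : H) (y : H'),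
      e (Submodule.Quotient.mk x) = Submodule.Quotient.mk y ↔
        ∃ a ∈ K', ∃ b, ((x : X), b) ∈ C ∧ (y : Y) = a + b := by
  obtain ⟨e, he⟩ := exists_linearEquiv_apply_eq_iff_mem (G := subquotientRel C H K H' K')
    (fun p => by
      obtain ⟨x, rfl⟩ := Submodule.Quotient.mk_surjective _ p
      obtain ⟨y, hy, hC⟩ := left_total x x.2
      exact ⟨_, mk_mem_subquotientRel (y := ⟨y, hy⟩) hC⟩)
    (fun q => by
      obtain ⟨y, rfl⟩ := Submodule.Quotient.mk_surjective _ q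
      obtain ⟨x, hx, hC⟩ := right_total y y.2
      exact ⟨_, mk_mem_subquotientRel (x := ⟨x, hx⟩) hC⟩)
    (fun p q hpq => by
      obtain ⟨x, y, hC, rfl, rfl⟩ := exists_rep_of_mem_subquotientRel hpq
      rw [Submodule.Quotient.mk_eq_zero, Submodule.Quotient.mk_eq_zero]
      exact mem_iff_of_rel x x.2 y y.2 hC)
  exact ⟨e, fun x y => (he _ _).trans <| mk_mem_subquotientRel_iff hK' left_total
    (fun x hx y hy hC => (mem_iff_of_rel x hx y hy hC).1) x y⟩

end Subquotient

section Relation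

variable {C : Submodule R (M × M)} {x y : M}

theorem relSharp_relInv (C : Submodule R (M × M)) : relSharp (relInv C) = relSharp C :=
  Set.inter_comm _ _

theorem relFlat_relInv (C : Submodule R (M × M)) : relFlat (relInv C) = relFlat C := by
  ext m
  constructor <;> exact fun ⟨a, ha, b, hb, hm⟩ => ⟨b, hb, a, ha, hm.trans (add_comm a b)⟩

theorem sub_mem_relDD (hx : x ∈ relDD C) (hy : y ∈ relDD C) : x - y ∈ relDD C := by
  obtain ⟨f, rfl, hf⟩ := hx
  obtain ⟨g, rfl, hg⟩ := hy
  exact ⟨f - g, rfl, fun n => C.sub_mem (hf n) (hg n)⟩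

theorem mem_relDD_of_rel (h : (x, y) ∈ C) (hy : y ∈ relDD C) : x ∈ relDD C := by
  obtain ⟨f, rfl, hf⟩ := hy
  exact ⟨fun n => n.casesOn x f, rfl, Nat.rec h fun n _ => hf n⟩

theorem mem_relD_of_rel (h : (x, y) ∈ C) (hy : y ∈ relD C) : x ∈ relD C := by
  obtain ⟨f, rfl, hf, N, hN⟩ := hy
  refine ⟨fun n => n.casesOn x f, rfl, Nat.rec h fun n _ => hf n, N + 1, fun n hn => ?_⟩
  cases n with
  | zero => exact absurd hn (Nat.not_succ_le_zero N)
  | succ n => exact hN n (Nat.le_of_succ_le_succ hn)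

theorem exists_rel_of_mem_relDD (hx : x ∈ relDD C) : ∃ y ∈ relDD C, (x, y) ∈ C := by
  obtain ⟨f, rfl, hf⟩ := hx
  exact ⟨f 1, ⟨fun n => f (n + 1), rfl, fun n => hf (n + 1)⟩, hf 0⟩

theorem exists_rel_of_mem_relD (hx : x ∈ relD C) : ∃ y ∈ relD C, (x, y) ∈ C := by
  obtain ⟨f, rfl, hf, N, hN⟩ := hx
  exact ⟨f 1, ⟨fun n => f (n + 1), rfl, fun n => hf (n + 1), N,
    fun n hn => hN (n + 1) (Nat.le_succ_of_le hn)⟩, hf 0⟩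

theorem exists_rel_right_of_mem_relSharp (hx : x ∈ relSharp C) : ∃ y ∈ relSharp C, (x, y) ∈ C := by
  obtain ⟨y, hy, hxy⟩ := exists_rel_of_mem_relDD hx.1
  exact ⟨y, ⟨hy, mem_relDD_of_rel (mem_relInv.2 hxy) hx.2⟩, hxy⟩

theorem exists_rel_left_of_mem_relSharp (hy : y ∈ relSharp C) : ∃ x ∈ relSharp C, (x, y) ∈ C := by
  rw [← relSharp_relInv] at hy ⊢
  exact exists_rel_right_of_mem_relSharp hy

theorem mem_relFlat_of_rel (h : (x, y) ∈ C) (hy : y ∈ relDD C) (hx : x ∈ relFlat C) :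
    y ∈ relFlat C := by
  obtain ⟨a, ⟨-, ha⟩, b, ⟨hb_inv, hb⟩, rfl⟩ := hx
  obtain ⟨b₁, hb₁, hbb₁⟩ := exists_rel_of_mem_relD hb
  -- The required decomposition is `y = (y - b₁) + b₁`, since `y - b₁` is a successor of `a`.
  have hab₁ : (a, y - b₁) ∈ C := by
    simpa only [Prod.mk_sub_mk, add_sub_cancel_right] using C.sub_mem h hbb₁
  exact ⟨y - b₁,
    ⟨sub_mem_relDD hy (relD_subset_relDD C hb₁), mem_relD_of_rel (mem_relInv.2 hab₁) ha⟩,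
    b₁, ⟨mem_relDD_of_rel (mem_relInv.2 hbb₁) hb_inv, hb₁⟩, (sub_add_cancel y b₁).symm⟩

theorem mem_relFlat_iff_of_rel (h : (x, y) ∈ C) (hx : x ∈ relDD (relInv C)) (hy : y ∈ relDD C) :
    x ∈ relFlat C ↔ y ∈ relFlat C := by
  refine ⟨mem_relFlat_of_rel h hy, ?_⟩
  rw [← relFlat_relInv]
  exact mem_relFlat_of_rel (mem_relInv.2 h) hx

end Relation

/-- there is a well-defined `R`-module automorphism `θ` of `C^♯/C^♭`
determined by `θ(m + C^♭) = m' + C^♭` iff `m' ∈ C^♯ ∩ (C^♭ + Cm)`. -/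
theorem stmt3 (C : Submodule R (M × M))
    (Sharp Flat : Submodule R M)
    (hS : (Sharp : Set M) = relSharp C) (hF : (Flat : Set M) = relFlat C)
    (hle : Flat ≤ Sharp) :
    ∃ θ : (↥Sharp ⧸ Flat.comap Sharp.subtype) ≃ₗ[R] (↥Sharp ⧸ Flat.comap Sharp.subtype),
      ∀ m m' : Sharp,
        (θ (Submodule.Quotient.mk m) = Submodule.Quotient.mk m' ↔
          ((m' : M) ∈ relSharp C ∧
            ∃ a ∈ relFlat C, ∃ b : M, ((m : M), b) ∈ C ∧ (m' : M) = a + b)) := by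
  simp only [Set.ext_iff, SetLike.mem_coe] at hS hF
  simp only [← hS, ← hF]
  have right_rel (x) (hx : x ∈ Sharp) : ∃ y ∈ Sharp, (x, y) ∈ C := by
    simpa only [hS] using exists_rel_right_of_mem_relSharp ((hS x).1 hx)
  have left_rel (y) (hy : y ∈ Sharp) : ∃ x ∈ Sharp, (x, y) ∈ C := by
    simpa only [hS] using exists_rel_left_of_mem_relSharp ((hS y).1 hy)
  have mem_flat_iff (x) (hx : x ∈ Sharp) (y) (hy : y ∈ Sharp) (h : (x, y) ∈ C) :
      x ∈ Flat ↔ y ∈ Flat := by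
    simpa only [hF] using mem_relFlat_iff_of_rel h ((hS x).1 hx).2 ((hS y).1 hy).1
  obtain ⟨θ, hθ⟩ := exists_subquotient_linearEquiv hle right_rel left_rel mem_flat_iff
  exact ⟨θ, fun m m' => (hθ m m').trans (and_iff_right m'.2).symm⟩
end

section
/- Let R be a commutative ring, L, M R-modules, and f : L → M an R-linear map with the property that (f(x), f(y)) ∈ C whenever (x,y) ∈ B, where B is an R-linear relation on L and C is an R-linear relation on M. Then f(B^♯) ⊆ C^♯ and f(B^♭) ⊆ C^♭, so f induces an R-linear map B^♯/B^♭ → C^♯/C^♭ that intertwines the induced automorphisms: θ_C(f(ℓ) + C^♭) = f(θ_B(ℓ)) + C^♭ for all ℓ ∈ B^♯. -/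
variable {R : Type*} [CommRing R] {M : Type*} [AddCommGroup M] [Module R M]

variable {L : Type*} [AddCommGroup L] [Module R L]

/-- The coset `θ_C (m + C^♭)` for `m ∈ C^♯`, in the form `C^♯ ∩ (C^♭ + C m)` that characterises the
automorphism `θ_C` of `C^♯ / C^♭`. For `m ∉ C^♯` the set carries no such meaning
and may be empty. -/
def relTheta (C : Submodule R (M × M)) (m : M) : Set M :=
  {m' | m' ∈ relSharp C ∧ ∃ a ∈ relFlat C, ∃ b : M, (m, b) ∈ C ∧ m' = a + b}

section MapsTo

variable {S : Type*} [CommRing S] {N : Type*} [AddCommGroup N] [Module S N]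
  {B : Submodule R (L × L)} {C : Submodule S (N × N)}

theorem mapsTo_relInv {f : L → N} (hf : Set.MapsTo (Prod.map f f) B C) :
    Set.MapsTo (Prod.map f f) (relInv B) (relInv C) :=
  fun _ h => hf h

theorem mapsTo_relDD {f : L → N} (hf : Set.MapsTo (Prod.map f f) B C) :
    Set.MapsTo f (relDD B) (relDD C) := by
  rintro _ ⟨u, rfl, hu⟩
  exact ⟨f ∘ u, rfl, fun n => hf (hu n)⟩

theorem mapsTo_relSharp {f : L → N} (hf : Set.MapsTo (Prod.map f f) B C) :
    Set.MapsTo f (relSharp B) (relSharp C) :=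
  (mapsTo_relDD hf).inter_inter (mapsTo_relDD (mapsTo_relInv hf))

variable {F : Type*} [FunLike F L N] {f : F}

theorem mapsTo_relD [ZeroHomClass F L N] (hf : Set.MapsTo (Prod.map f f) B C) :
    Set.MapsTo f (relD B) (relD C) := by
  rintro _ ⟨u, rfl, hu, k, hk⟩
  have hfu : ∀ n, k ≤ n → f (u n) = 0 := fun n hn => by rw [hk n hn, map_zero]
  exact ⟨f ∘ u, rfl, fun n => hf (hu n), k, hfu⟩

theorem mapsTo_relFlat [AddMonoidHomClass F L N] (hf : Set.MapsTo (Prod.map f f) B C) :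
    Set.MapsTo f (relFlat B) (relFlat C) := by
  have hf' := mapsTo_relInv hf
  rintro _ ⟨a, ha, b, hb, rfl⟩
  exact ⟨f a, (mapsTo_relDD hf).inter_inter (mapsTo_relD hf') ha,
    f b, (mapsTo_relDD hf').inter_inter (mapsTo_relD hf) hb, map_add f a b⟩

theorem mapsTo_relTheta [AddMonoidHomClass F L N] (hf : Set.MapsTo (Prod.map f f) B C) (ℓ : L) :
    Set.MapsTo f (relTheta B ℓ) (relTheta C (f ℓ)) := by
  rintro _ ⟨hsharp, a, ha, b, hb, rfl⟩
  exact ⟨mapsTo_relSharp hf hsharp, f a, mapsTo_relFlat hf ha, f b, hf hb, map_add f a b⟩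

theorem stmt4_general [AddMonoidHomClass F L N] (hf : Set.MapsTo (Prod.map f f) B C) :
    Set.MapsTo f (relSharp B) (relSharp C) ∧
    Set.MapsTo f (relFlat B) (relFlat C) ∧
    ∀ ℓ, Set.MapsTo f (relTheta B ℓ) (relTheta C (f ℓ)) :=
  ⟨mapsTo_relSharp hf, mapsTo_relFlat hf, mapsTo_relTheta hf⟩

end MapsTo

/-- a linear map compatible with relations `B` and `C` sends `B^♯` into `C^♯`
and `B^♭` into `C^♭`, and the induced map `B^♯/B^♭ → C^♯/C^♭` intertwines the induced
automorphisms `θ_B` and `θ_C` (expressed via their defining characterisation). -/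
theorem stmt4 (B : Submodule R (L × L)) (C : Submodule R (M × M))
    (f : L →ₗ[R] M) (hf : ∀ x y : L, (x, y) ∈ B → (f x, f y) ∈ C) :
    (∀ ℓ ∈ relSharp B, f ℓ ∈ relSharp C) ∧
    (∀ ℓ ∈ relFlat B, f ℓ ∈ relFlat C) ∧
    (∀ ℓ ℓ' : L, ℓ ∈ relSharp B →
      (ℓ' ∈ relSharp B ∧ ∃ a ∈ relFlat B, ∃ b : L, (ℓ, b) ∈ B ∧ ℓ' = a + b) →
      (f ℓ' ∈ relSharp C ∧ ∃ a ∈ relFlat C, ∃ b : M, (f ℓ, b) ∈ C ∧ f ℓ' = a + b)) := by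
  obtain ⟨hsharp, hflat, htheta⟩ := stmt4_general (B := B) (C := C) (f := f) fun _ h => hf _ _ h
  exact ⟨hsharp, hflat, fun ℓ _ _ hℓ' => htheta ℓ hℓ'⟩
end

section
/- Let R be a semisimple commutative ring and (M, C) an R-linear relation. If there exists an R[T,T⁻¹]-module X and an R-linear map ρ : X → M with C^♯ = C^♭ + im(ρ), ρ(Tx) ∈ Cρ(x) for all x ∈ X, and ρ⁻¹(C^♭) = rad(X) (= 0 since R is semisimple), then C^♯ = C^♭ ⊕ Y for an R[T,T⁻¹]-submodule structure on Y = im(ρ) such that for y, z ∈ Y, Ty = z if and only if z ∈ Cy. -/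
variable {R : Type*} [CommRing R] {M : Type*} [AddCommGroup M] [Module R M]

/-! The heart of the matter is that `C` restricted to `Y = im ρ` is the graph of `T`.
If `y, z ∈ Y` and `z ∈ Cy`, then subtracting `Ty ∈ Cy` gives `z - Ty ∈ C0`, so `z - Ty ∈ (C⁻¹)'`.
As iterating `T` shows `Y ⊆ C''`, the element `z - Ty` lies in `C'' ∩ (C⁻¹)' ⊆ C^♭`, which meets
`Y` only in `0`. -/

theorem zero_mem_relDD (C : Submodule R (M × M)) : (0 : M) ∈ relDD C :=
  ⟨fun _ => 0, rfl, fun _ => C.zero_mem⟩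

theorem mem_relD_of_mk_zero_mem {C : Submodule R (M × M)} {m : M} (hm : (m, 0) ∈ C) :
    m ∈ relD C := by
  refine ⟨fun n => if n = 0 then m else 0, rfl, fun n => ?_, 1, fun n hn => ?_⟩
  · cases n with
    | zero => exact hm
    | succ n => exact C.zero_mem
  · exact if_neg (Nat.one_le_iff_ne_zero.mp hn)

theorem zero_mem_relD (C : Submodule R (M × M)) : (0 : M) ∈ relD C :=
  mem_relD_of_mk_zero_mem C.zero_mem

theorem relDD_inter_relD_relInv_subset_relFlat (C : Submodule R (M × M)) :
    relDD C ∩ relD (relInv C) ⊆ relFlat C := fun m hm =>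
  ⟨m, hm, 0, ⟨zero_mem_relDD _, zero_mem_relD _⟩, (add_zero m).symm⟩

theorem zero_mem_relFlat (C : Submodule R (M × M)) : (0 : M) ∈ relFlat C :=
  relDD_inter_relD_relInv_subset_relFlat C ⟨zero_mem_relDD _, zero_mem_relD _⟩

theorem mem_relFlat_of_zero_mk_mem {C : Submodule R (M × M)} {m : M} (hm : m ∈ relDD C)
    (h0m : (0, m) ∈ C) : m ∈ relFlat C :=
  relDD_inter_relD_relInv_subset_relFlat C ⟨hm, mem_relD_of_mk_zero_mem (C := relInv C) h0m⟩

theorem range_subset_relDD {C : Submodule R (M × M)} {X : Type*} {f : X → M} {T : X → X}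
    (hT : ∀ x, (f x, f (T x)) ∈ C) : Set.range f ⊆ relDD C := by
  rintro _ ⟨x, rfl⟩
  refine ⟨fun n => f (T^[n] x), rfl, fun n => ?_⟩
  simpa only [Function.iterate_succ_apply'] using hT (T^[n] x)

section TrivialPreimage

variable {G H : Type*} [AddGroup G] [AddGroup H] {f : G →+ H} {S : Set H}

theorem injective_of_map_mem_imp_eq_zero (h0 : 0 ∈ S) (hS : ∀ x, f x ∈ S → x = 0) :
    Function.Injective f :=
  (injective_iff_map_eq_zero f).2 fun x hx => hS x (hx ▸ h0)

theorem eq_zero_and_map_eq_zero_of_add_map_eq_zero (hS : ∀ x, f x ∈ S → x = 0) {a : H}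
    (ha : a ∈ S) {x : G} (hax : a + f x = 0) : a = 0 ∧ f x = 0 := by
  have ha_eq : a = f (-x) := by rw [map_neg, eq_neg_of_add_eq_zero_left hax]
  have hx : x = 0 := neg_eq_zero.mp (hS (-x) (ha_eq ▸ ha))
  have hfx : f x = 0 := by rw [hx, map_zero]
  exact ⟨by rwa [hfx, add_zero] at hax, hfx⟩

end TrivialPreimage

theorem mk_map_mem_iff_eq {C : Submodule R (M × M)} {X : Type*} [AddGroup X] {ρ : X →+ M}
    {T : X → X} (hT : ∀ x, (ρ x, ρ (T x)) ∈ C) (hρ : ∀ x, ρ x ∈ relFlat C → x = 0) {x w : X} :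
    (ρ x, ρ w) ∈ C ↔ w = T x := by
  refine ⟨fun hw => ?_, fun hw => hw ▸ hT x⟩
  have h0 : (0, ρ (w - T x)) ∈ C := by
    simpa only [Prod.mk_sub_mk, sub_self, map_sub] using C.sub_mem hw (hT x)
  have hflat : ρ (w - T x) ∈ relFlat C :=
    mem_relFlat_of_zero_mk_mem (range_subset_relDD hT ⟨_, rfl⟩) h0
  exact sub_eq_zero.mp (hρ _ hflat)

theorem stmt13_general (C : Submodule R (M × M)) {X : Type*} [AddGroup X] (ρ : X →+ M)
    (T : X → X) (hT : ∀ x, (ρ x, ρ (T x)) ∈ C) (hρ : ∀ x, ρ x ∈ relFlat C → x = 0) :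
    Function.Injective ρ ∧
    (∀ a ∈ relFlat C, ∀ x, a + ρ x = 0 → a = 0 ∧ ρ x = 0) ∧
    (∀ (x : X) (z : M), (z ∈ Set.range ρ ∧ (ρ x, z) ∈ C) ↔ z = ρ (T x)) := by
  refine ⟨injective_of_map_mem_imp_eq_zero (zero_mem_relFlat C) hρ,
    fun a ha x => eq_zero_and_map_eq_zero_of_add_map_eq_zero hρ ha, fun x z => ⟨?_, ?_⟩⟩
  · rintro ⟨⟨w, rfl⟩, hw⟩
    rw [(mk_map_mem_iff_eq hT hρ).mp hw]
  · rintro rfl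
    exact ⟨⟨T x, rfl⟩, hT x⟩

/-- over a semisimple commutative ring, a reduction `(X ∣ ρ)` of `(M, C)`
meeting in the radical (`ρ⁻¹(C^♭) = rad X = 0`) yields `C^♯ = C^♭ ⊕ Y` with
`Y = im ρ` an `R[T,T⁻¹]`-module (via `ρ`) such that `Ty = z` iff `z ∈ Cy`. -/
theorem stmt13 [IsSemisimpleRing R] (C : Submodule R (M × M))
    (X : Type*) [AddCommGroup X] [Module R X]
    [Module (LaurentPolynomial R) X] [IsScalarTower R (LaurentPolynomial R) X]
    (ρ : X →ₗ[R] M)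
    (hsharp : relSharp C = {m | ∃ a ∈ relFlat C, ∃ x : X, m = a + ρ x})
    (hT : ∀ x : X, (ρ x, ρ ((LaurentPolynomial.T 1 : LaurentPolynomial R) • x)) ∈ C)
    (hrad : ∀ x : X, ρ x ∈ relFlat C → x = 0) :
    Function.Injective ρ ∧
    (∀ a ∈ relFlat C, ∀ x : X, a + ρ x = 0 → a = 0 ∧ ρ x = 0) ∧
    (∀ (x : X) (z : M),
      (z ∈ Set.range ρ ∧ (ρ x, z) ∈ C) ↔
        z = ρ ((LaurentPolynomial.T 1 : LaurentPolynomial R) • x)) :=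
  stmt13_general C ρ.toAddMonoidHom _ hT hrad
end
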